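/- Let A be an associative unital algebra over a field k of prime characteristic p. The truncated exponential E restricts to a bijection from the set {x ∈ A : x^p = 0} of p-nilpotent elements onto the set {u ∈ A : (u − 1)^p = 0} of p-unipotent elements, with inverse given by the truncated logarithm L. (This is the GL_n instance of the unique equivariant bijection exp : N_1(g) → U_1(G) of Theorem 3.4.) -/

import Mathlib

/-!
Let `E` and `L` be truncated at order `n + 1`, with `n!` invertible in `k`; the case of interest is
`n + 1 = p`. The polynomial ring `k[X]` carries the universal element `X`, so it suffices to prove
`L(E(X)) ≡ X` and `E(L(1 + X)) ≡ 1 + X` modulo `X ^ (n + 1)`.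

Every derivation satisfies `D E(f) ≡ E(f) D f` modulo `f ^ n` and `u D L(u) ≡ D u` modulo
`(u - 1) ^ n`. Hence, modulo `X ^ n`, the difference `P` of the two sides solves `E(X) P' ≡ 0` in
the first case and `(1 + X) P' ≡ P` in the second. Since `P(0) = 0` and `1, …, n` are invertible, a
solution of such a homogeneous linear equation vanishes modulo `X ^ (n + 1)`.
-/

/-- The truncated exponential `E(x) = ∑_{i=0}^{p-1} (1/i!) x^i`. -/
noncomputable def truncExp (k : Type*) [Field k] {A : Type*} [Ring A] [Algebra k A]
    (p : ℕ) (x : A) : A :=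
  ∑ i ∈ Finset.range p, ((Nat.factorial i : k))⁻¹ • x ^ i


/-- The truncated logarithm `L(u) = ∑_{i=1}^{p-1} ((-1)^{i+1}/i) (u-1)^i`. -/
noncomputable def truncLog (k : Type*) [Field k] {A : Type*} [Ring A] [Algebra k A]
    (p : ℕ) (u : A) : A :=
  ∑ i ∈ Finset.Icc 1 (p - 1), (((-1 : k) ^ (i + 1)) / (i : k)) • (u - 1) ^ i

open Polynomial
open scoped Nat

section LinearODE

variable {R : Type*} {n : ℕ}

section CommSemiring

variable [CommSemiring R]

lemma isUnit_natCast_of_isUnit_factorial (hn : IsUnit (n ! : R)) {i : ℕ} (hi : 0 < i)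
    (hin : i ≤ n) : IsUnit (i : R) :=
  isUnit_of_dvd_unit (Nat.cast_dvd_cast (Nat.dvd_factorial hi hin)) hn

lemma X_pow_succ_dvd_of_X_pow_dvd_derivative (hn : IsUnit (n ! : R)) {P : R[X]} (h₀ : X ∣ P)
    (h : X ^ n ∣ derivative P) : X ^ (n + 1) ∣ P := by
  rw [X_dvd_iff] at h₀
  rw [X_pow_dvd_iff] at h ⊢
  rintro (_ | d) hd
  · exact h₀
  · have hd_unit : IsUnit ((d + 1 : ℕ) : R) :=
      isUnit_natCast_of_isUnit_factorial hn d.succ_pos (by lia)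
    have hcoeff := h d (by lia)
    rw [coeff_derivative, ← Nat.cast_succ] at hcoeff
    exact hd_unit.mul_left_eq_zero.mp hcoeff

end CommSemiring

variable [CommRing R]

lemma X_pow_succ_dvd_of_X_pow_dvd_mul_derivative_sub (hn : IsUnit (n ! : R)) {a b P : R[X]}
    (hb : IsCoprime X b) (h₀ : X ∣ P) (h : X ^ n ∣ b * derivative P - a * P) :
    X ^ (n + 1) ∣ P := by
  suffices ∀ m ≤ n, X ^ (m + 1) ∣ P from this n le_rfl
  intro m hm
  induction m with
  | zero => simpa using h₀
  | succ m ih =>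
    have hP : X ^ (m + 1) ∣ P := ih (by lia)
    have hbP : X ^ (m + 1) ∣ b * derivative P :=
      (dvd_sub_left (hP.mul_left a)).mp ((pow_dvd_pow X hm).trans h)
    exact X_pow_succ_dvd_of_X_pow_dvd_derivative (hn.natCast_factorial_of_le hm) h₀
      (hb.pow_left.dvd_of_dvd_mul_left hbP)

end LinearODE

section Truncated

variable {k A : Type*} [Field k] [Ring A] [Algebra k A]

lemma map_truncExp {B : Type*} [Ring B] [Algebra k B] (f : A →ₐ[k] B) (n : ℕ) (x : A) :
    f (truncExp k n x) = truncExp k n (f x) := by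
  simp [truncExp]

lemma map_truncLog {B : Type*} [Ring B] [Algebra k B] (f : A →ₐ[k] B) (n : ℕ) (u : A) :
    f (truncLog k n u) = truncLog k n (f u) := by
  simp [truncLog]

lemma truncExp_succ (n : ℕ) (x : A) :
    truncExp k (n + 1) x = truncExp k n x + (n ! : k)⁻¹ • x ^ n :=
  Finset.sum_range_succ _ n

lemma truncLog_succ_eq_sum_range (n : ℕ) (u : A) :
    truncLog k (n + 1) u =
      ∑ i ∈ Finset.range n, ((-1 : k) ^ i / (i + 1 : ℕ)) • (u - 1) ^ (i + 1) := by
  rw [truncLog, Nat.add_sub_cancel, Finset.range_eq_Ico, ← Finset.Ico_add_one_right_eq_Icc,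
    ← Finset.sum_Ico_add' _ 0 n 1]
  simp [pow_succ]

lemma dvd_truncExp_succ_sub_one (n : ℕ) (x : A) : x ∣ truncExp k (n + 1) x - 1 := by
  rw [truncExp, Finset.sum_range_succ', Nat.factorial_zero, Nat.cast_one, inv_one, one_smul,
    pow_zero, add_sub_cancel_right]
  exact Finset.dvd_sum fun i _ ↦ dvd_smul_of_dvd _ (dvd_pow_self x i.succ_ne_zero)

lemma sub_one_dvd_truncLog (n : ℕ) (u : A) : u - 1 ∣ truncLog k n u :=
  Finset.dvd_sum fun _ hi ↦ dvd_smul_of_dvd _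
    (dvd_pow_self _ (Nat.one_le_iff_ne_zero.mp (Finset.mem_Icc.mp hi).1))

end Truncated

section Derivation

variable {k B M : Type*} [Field k] [CommRing B] [Algebra k B] [AddCommGroup M] [Module k M]
  [Module B M] [IsScalarTower k B M] {n : ℕ}

lemma derivation_truncExp_succ (D : Derivation k B M) (hn : IsUnit (n ! : k)) (f : B) :
    D (truncExp k (n + 1) f) = truncExp k n f • D f := by
  have hterm : ∀ i < n, D (((i + 1)! : k)⁻¹ • f ^ (i + 1)) = ((i ! : k)⁻¹ • f ^ i) • D f := by
    intro i hi
    have hi_ne : ((i + 1 : ℕ) : k) ≠ 0 :=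
      (isUnit_natCast_of_isUnit_factorial hn i.succ_pos hi).ne_zero
    rw [D.map_smul, D.leibniz_pow, Nat.add_sub_cancel, ← Nat.cast_smul_eq_nsmul k, smul_smul,
      smul_assoc, Nat.factorial_succ, Nat.cast_mul, mul_inv_rev, inv_mul_cancel_right₀ hi_ne]
  rw [truncExp, truncExp, Finset.sum_range_succ', D.map_add, map_sum, pow_zero, D.map_smul,
    D.map_one_eq_zero, smul_zero, add_zero, Finset.sum_smul]
  exact Finset.sum_congr rfl fun i hi ↦ hterm i (Finset.mem_range.mp hi)

lemma smul_derivation_truncLog_succ (D : Derivation k B M) (hn : IsUnit (n ! : k)) (u : B) :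
    u • D (truncLog k (n + 1) u) = (1 - (1 - u) ^ n) • D u := by
  have hterm : ∀ i < n,
      D (((-1 : k) ^ i / (i + 1 : ℕ)) • (u - 1) ^ (i + 1)) = (1 - u) ^ i • D u := by
    intro i hi
    have hi_ne : ((i + 1 : ℕ) : k) ≠ 0 :=
      (isUnit_natCast_of_isUnit_factorial hn i.succ_pos hi).ne_zero
    rw [D.map_smul, D.leibniz_pow, Nat.add_sub_cancel, D.map_sub, D.map_one_eq_zero, sub_zero,
      ← Nat.cast_smul_eq_nsmul k, smul_smul, div_mul_cancel₀ _ hi_ne, ← smul_assoc,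
      ← neg_sub u, neg_pow (u - 1), Algebra.smul_def, map_pow, map_neg, map_one]
  calc u • D (truncLog k (n + 1) u)
      = u • (∑ i ∈ Finset.range n, (1 - u) ^ i) • D u := by
        rw [truncLog_succ_eq_sum_range, map_sum, Finset.sum_smul]
        exact congrArg (u • ·) (Finset.sum_congr rfl fun i hi ↦ hterm i (Finset.mem_range.mp hi))
    _ = (1 - (1 - u) ^ n) • D u := by
        rw [smul_smul, ← mul_neg_geom_sum, sub_sub_cancel]

end Derivation

section Universal

variable {k : Type*} [Field k] {n : ℕ}

lemma X_dvd_truncLog_one_add_X (n : ℕ) : (X : k[X]) ∣ truncLog k n (1 + X) := by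
  have h := sub_one_dvd_truncLog (k := k) n (1 + X : k[X])
  rwa [add_sub_cancel_left] at h

lemma X_pow_succ_dvd_truncLog_truncExp_X_sub (hn : IsUnit (n ! : k)) :
    (X : k[X]) ^ (n + 1) ∣ truncLog k (n + 1) (truncExp k (n + 1) X) - X := by
  set u : k[X] := truncExp k (n + 1) X with hu
  have hXu : X ∣ u - 1 := dvd_truncExp_succ_sub_one n X
  have hcoprime : IsCoprime X u := by
    simpa only [sub_add_cancel] using IsCoprime.add_one_right_of_dvd hXu
  refine X_pow_succ_dvd_of_X_pow_dvd_mul_derivative_sub (a := 0) hn hcoprime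
    (dvd_sub_self_right.mpr (hXu.trans (sub_one_dvd_truncLog _ u))) ?_
  have hu' : derivative u = truncExp k n X := by
    simpa using derivation_truncExp_succ derivative' hn (X : k[X])
  have hL' : u * derivative (truncLog k (n + 1) u) = (1 - (1 - u) ^ n) * derivative u :=
    smul_derivation_truncLog_succ derivative' hn u
  have hode : u * derivative (truncLog k (n + 1) u - X) - 0 * (truncLog k (n + 1) u - X) =
      -((n ! : k)⁻¹ • X ^ n + (1 - u) ^ n * derivative u) := by
    rw [derivative_sub, derivative_X]
    linear_combination hL' + hu' - hu.trans (truncExp_succ n X)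
  rw [hode, dvd_neg]
  exact dvd_add (dvd_smul_of_dvd _ dvd_rfl)
    ((pow_dvd_pow_of_dvd (dvd_sub_comm.mp hXu) n).mul_right _)

lemma X_pow_succ_dvd_truncExp_truncLog_one_add_X_sub (hn : IsUnit (n ! : k)) :
    (X : k[X]) ^ (n + 1) ∣ truncExp k (n + 1) (truncLog k (n + 1) (1 + X)) - (1 + X) := by
  set l : k[X] := truncLog k (n + 1) (1 + X)
  have hXl : X ∣ l := X_dvd_truncLog_one_add_X (n + 1)
  have h₀ : X ∣ truncExp k (n + 1) l - (1 + X) := by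
    rw [← sub_sub]
    exact dvd_sub_self_right.mpr (hXl.trans (dvd_truncExp_succ_sub_one n l))
  have hcoprime : IsCoprime (X : k[X]) (1 + X) :=
    add_comm (X : k[X]) 1 ▸ IsCoprime.add_one_right_of_dvd dvd_rfl
  refine X_pow_succ_dvd_of_X_pow_dvd_mul_derivative_sub (a := 1) hn hcoprime h₀ ?_
  have hE' : derivative (truncExp k (n + 1) l) = truncExp k n l * derivative l :=
    derivation_truncExp_succ derivative' hn l
  have hl' : (1 + X) * derivative l = 1 - (-X) ^ n := by
    have h := smul_derivation_truncLog_succ derivative' hn (1 + X : k[X])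
    simpa [l] using h
  have hode : (1 + X) * derivative (truncExp k (n + 1) l - (1 + X)) -
      1 * (truncExp k (n + 1) l - (1 + X)) =
      -((n ! : k)⁻¹ • l ^ n + truncExp k n l * (-X) ^ n) := by
    rw [derivative_sub, derivative_add, derivative_one, derivative_X]
    linear_combination (1 + X) * hE' + truncExp k n l * hl' - truncExp_succ (k := k) n l
  rw [hode, dvd_neg]
  exact dvd_add (dvd_smul_of_dvd _ (pow_dvd_pow_of_dvd hXl n))
    ((pow_dvd_pow_of_dvd (dvd_neg.mpr dvd_rfl) n).mul_left _)

end Universal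

section Nilpotent

variable {k A : Type*} [Field k] [Ring A] [Algebra k A] {n m : ℕ} {x u : A}

lemma aeval_eq_zero_of_X_pow_dvd {P : k[X]} (hP : X ^ m ∣ P) (hx : x ^ m = 0) :
    aeval x P = 0 :=
  aeval_eq_zero_of_dvd_aeval_eq_zero hP (by simpa using hx)

variable (k) in
lemma truncExp_succ_sub_one_pow_eq_zero (n : ℕ) (hx : x ^ m = 0) :
    (truncExp k (n + 1) x - 1) ^ m = 0 := by
  have hX : (X : k[X]) ∣ truncExp k (n + 1) X - 1 := dvd_truncExp_succ_sub_one n X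
  simpa [map_truncExp] using aeval_eq_zero_of_X_pow_dvd (pow_dvd_pow_of_dvd hX m) hx

variable (k) in
lemma truncLog_pow_eq_zero (n : ℕ) (hu : (u - 1) ^ m = 0) : truncLog k n u ^ m = 0 := by
  have hX : (X : k[X]) ∣ truncLog k n (1 + X) := X_dvd_truncLog_one_add_X n
  simpa [map_truncLog] using aeval_eq_zero_of_X_pow_dvd (pow_dvd_pow_of_dvd hX m) hu

lemma truncLog_truncExp (hn : IsUnit (n ! : k)) (hx : x ^ (n + 1) = 0) :
    truncLog k (n + 1) (truncExp k (n + 1) x) = x := by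
  simpa [map_truncLog, map_truncExp, sub_eq_zero] using
    aeval_eq_zero_of_X_pow_dvd (X_pow_succ_dvd_truncLog_truncExp_X_sub hn) hx

lemma truncExp_truncLog (hn : IsUnit (n ! : k)) (hu : (u - 1) ^ (n + 1) = 0) :
    truncExp k (n + 1) (truncLog k (n + 1) u) = u := by
  simpa [map_truncLog, map_truncExp, sub_eq_zero] using
    aeval_eq_zero_of_X_pow_dvd (X_pow_succ_dvd_truncExp_truncLog_one_add_X_sub hn) hu

end Nilpotent

theorem truncExp_bijOn_general {k A : Type*} [Field k] [Ring A] [Algebra k A]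
    {n : ℕ} (hn : IsUnit (n ! : k)) :
    Set.BijOn (truncExp k (n + 1)) {x : A | x ^ (n + 1) = 0} {u : A | (u - 1) ^ (n + 1) = 0} ∧
    Set.BijOn (truncLog k (n + 1)) {u : A | (u - 1) ^ (n + 1) = 0} {x : A | x ^ (n + 1) = 0} ∧
    (∀ x ∈ {x : A | x ^ (n + 1) = 0}, truncLog k (n + 1) (truncExp k (n + 1) x) = x) ∧
    (∀ u ∈ {u : A | (u - 1) ^ (n + 1) = 0}, truncExp k (n + 1) (truncLog k (n + 1) u) = u) := by
  have hLE : Set.LeftInvOn (truncLog k (n + 1)) (truncExp k (n + 1)) {x : A | x ^ (n + 1) = 0} :=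
    fun _ ↦ truncLog_truncExp hn
  have hEL : Set.LeftInvOn (truncExp k (n + 1)) (truncLog k (n + 1))
      {u : A | (u - 1) ^ (n + 1) = 0} :=
    fun _ ↦ truncExp_truncLog hn
  have hE : Set.BijOn (truncExp k (n + 1)) {x : A | x ^ (n + 1) = 0}
      {u : A | (u - 1) ^ (n + 1) = 0} :=
    Set.InvOn.bijOn ⟨hLE, hEL⟩ (fun _ ↦ truncExp_succ_sub_one_pow_eq_zero k n)
      (fun _ ↦ truncLog_pow_eq_zero k (n + 1))
  exact ⟨hE, hE.symm ⟨hEL, hLE⟩, hLE, hEL⟩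

/-- The truncated exponential is a bijection from `p`-nilpotent elements onto
`p`-unipotent elements, with inverse the truncated logarithm. -/
theorem truncExp_bijOn {k A : Type*} [Field k] [Ring A] [Algebra k A]
    (p : ℕ) [Fact p.Prime] [CharP k p] :
    Set.BijOn (truncExp k p) {x : A | x ^ p = 0} {u : A | (u - 1) ^ p = 0} ∧
    Set.BijOn (truncLog k p) {u : A | (u - 1) ^ p = 0} {x : A | x ^ p = 0} ∧
    (∀ x ∈ {x : A | x ^ p = 0}, truncLog k p (truncExp k p x) = x) ∧
    (∀ u ∈ {u : A | (u - 1) ^ p = 0}, truncExp k p (truncLog k p u) = u) := by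
  obtain ⟨n, rfl⟩ := Nat.exists_eq_add_one_of_ne_zero (Fact.out : p.Prime).ne_zero
  exact truncExp_bijOn_general ((IsUnit.natCast_factorial_iff_of_charP (n + 1)).mpr n.lt_succ_self)
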